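/- Let u : ℝ² → ℝ be a smooth function and let μ ≠ 0 be a real constant such that arctan λ₁(x) + arctan λ₂(x) = μ for every x ∈ ℝ², where λ₁(x), λ₂(x) are the eigenvalues of D²u(x). Then u is a quadratic polynomial. -/

import Mathlib

open Real

/-- Second partial derivative matrix (Hessian) of `u` at `x`. -/
noncomputable def hessianMatrix {n : ℕ} (u : EuclideanSpace ℝ (Fin n) → ℝ)
    (x : EuclideanSpace ℝ (Fin n)) : Matrix (Fin n) (Fin n) ℝ :=
  Matrix.of fun i j =>
    fderiv ℝ (fun y => fderiv ℝ u y (EuclideanSpace.single j 1)) x (EuclideanSpace.single i 1)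

/-- `u` is a quadratic polynomial. -/
def IsQuadraticPoly {n : ℕ} (u : EuclideanSpace ℝ (Fin n) → ℝ) : Prop :=
  ∃ (A : Matrix (Fin n) (Fin n) ℝ) (b : Fin n → ℝ) (c : ℝ), A.IsSymm ∧
    ∀ x, u x = (1/2) * (∑ i, ∑ j, A i j * x i * x j) + (∑ i, b i * x i) + c

/-!
Adding `cot μ * ‖x‖ ^ 2 / 2` to `u` turns the special Lagrangian equation into the Monge–Ampère
equation `det D²v = k ^ 2` with `k = |sin μ|⁻¹`, so it remains to see that `D²v` is constant
(Jörgens). Identify `ℝ²` with `ℂ` and let `f = ∇v`. Since `det D²v > 0`, after a change of sign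
`D²v` is positive definite and `f` is a monotone operator, whence `z ↦ k z + f z` is a bijection
of the plane. In this new coordinate (Lewy's rotation) the map `conj (k z - f z)` is entire,
because `det D²v = k ^ 2`, and `1`-Lipschitz, because `f` is monotone. By Liouville its complex
derivative is constant, and this derivative determines `D²v`.
-/

open Filter Topology ComplexConjugate
open scoped NNReal RealInnerProductSpace

section MonotoneOperator

variable {E : Type*} [NormedAddCommGroup E] [InnerProductSpace ℝ E] {f : E → E}

/-- Monotonicity in the sense of Minty for a single-valued, everywhere defined operator on a real
inner product space. -/
def IsMonotoneOperator (f : E → E) : Prop :=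
  ∀ x y, 0 ≤ ⟪f x - f y, x - y⟫

theorem isMonotoneOperator_of_hasFDerivAt {f' : E → E →L[ℝ] E}
    (hf : ∀ x, HasFDerivAt f (f' x) x) (hf' : ∀ x v, 0 ≤ ⟪f' x v, v⟫) :
    IsMonotoneOperator f := by
  intro x y
  have hline (t : ℝ) : HasDerivAt (fun s : ℝ ↦ y + s • (x - y)) (x - y) t := by
    simpa using ((hasDerivAt_id t).smul_const (x - y)).const_add y
  have hderiv (t : ℝ) : HasDerivAt (fun s : ℝ ↦ ⟪f (y + s • (x - y)), x - y⟫)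
      ⟪f' (y + t • (x - y)) (x - y), x - y⟫ t := by
    simpa using ((hf _).comp_hasDerivAt t (hline t)).inner ℝ (hasDerivAt_const t (x - y))
  have hmono := monotone_of_hasDerivAt_nonneg hderiv fun t ↦ hf' _ _
  simpa [inner_sub_left] using hmono zero_le_one

theorem IsMonotoneOperator.antilipschitzWith_smul_add (hf : IsMonotoneOperator f) {k : ℝ}
    (hk : 0 < k) : AntilipschitzWith k⁻¹.toNNReal fun x ↦ k • x + f x := by
  refine antilipschitzWith_iff_le_mul_dist.2 fun x y ↦ ?_
  rw [dist_eq_norm, dist_eq_norm, Real.coe_toNNReal _ (inv_nonneg.2 hk.le), inv_mul_eq_div,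
    le_div_iff₀' hk]
  rcases (norm_nonneg (x - y)).eq_or_lt with hxy | hxy
  · simp [← hxy]
  refine le_of_mul_le_mul_right ?_ hxy
  calc k * ‖x - y‖ * ‖x - y‖
      ≤ k * ‖x - y‖ * ‖x - y‖ + ⟪f x - f y, x - y⟫ := le_add_of_nonneg_right (hf x y)
    _ = ⟪k • (x - y) + (f x - f y), x - y⟫ := by
      rw [inner_add_left, real_inner_smul_left, real_inner_self_eq_norm_mul_norm, mul_assoc]
    _ = ⟪(k • x + f x) - (k • y + f y), x - y⟫ := by congr 1; module
    _ ≤ ‖(k • x + f x) - (k • y + f y)‖ * ‖x - y‖ := real_inner_le_norm _ _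

theorem IsMonotoneOperator.norm_smul_sub_sub_le (hf : IsMonotoneOperator f) {k : ℝ} (hk : 0 ≤ k)
    (x y : E) : ‖(k • x - f x) - (k • y - f y)‖ ≤ ‖(k • x + f x) - (k • y + f y)‖ := by
  have hinner : 0 ≤ ⟪k • (x - y), f x - f y⟫ := by
    rw [real_inner_smul_left, real_inner_comm]
    exact mul_nonneg hk (hf x y)
  rw [sub_sub_sub_comm, add_sub_add_comm, ← smul_sub, ← sq_le_sq₀ (norm_nonneg _) (norm_nonneg _),
    norm_sub_sq_real, norm_add_sq_real]
  linarith

end MonotoneOperator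

section Antilipschitz

variable {E F : Type*} [NormedAddCommGroup E] [NormedSpace ℝ E] [NormedAddCommGroup F]
  [NormedSpace ℝ F] {K : ℝ≥0}

theorem norm_le_mul_norm_of_hasFDerivAt_of_antilipschitzWith {f : E → F} {f' : E →L[ℝ] F} {x : E}
    (hf : AntilipschitzWith K f) (hf' : HasFDerivAt f f' x) (v : E) : ‖v‖ ≤ K * ‖f' v‖ := by
  have hlim := hf'.lim v tendsto_norm_atTop_atTop
  refine ge_of_tendsto (hlim.norm.const_mul (K : ℝ)) ?_
  filter_upwards [eventually_ne_atTop 0] with t ht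
  have hquot := hf.le_mul_dist (x + t⁻¹ • v) x
  rw [dist_eq_norm, dist_eq_norm, add_sub_cancel_left, norm_smul, norm_inv] at hquot
  rw [norm_smul]
  calc ‖v‖ = ‖t‖ * (‖t‖⁻¹ * ‖v‖) := (mul_inv_cancel_left₀ (norm_ne_zero_iff.2 ht) _).symm
    _ ≤ ‖t‖ * (K * ‖f (x + t⁻¹ • v) - f x‖) := by gcongr
    _ = K * (‖t‖ * ‖f (x + t⁻¹ • v) - f x‖) := by ring

theorem surjective_of_antilipschitzWith_of_contDiff [FiniteDimensional ℝ E] {f : E → E}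
    (hf : AntilipschitzWith K f) (hf' : ContDiff ℝ 1 f) : Function.Surjective f := by
  have := FiniteDimensional.proper ℝ E
  have hderiv_surj (x : E) : Function.Surjective (fderiv ℝ f x) := by
    refine (LinearMap.injective_iff_surjective (f := (fderiv ℝ f x : E →ₗ[ℝ] E))).1 ?_
    refine (injective_iff_map_eq_zero (fderiv ℝ f x)).2 fun v hv ↦ norm_le_zero_iff.1 ?_
    simpa [hv] using norm_le_mul_norm_of_hasFDerivAt_of_antilipschitzWith hf
      (hf'.differentiable one_ne_zero x).hasFDerivAt v
  have hopen : IsOpenMap f := isOpenMap_iff_nhds_le.2 fun x ↦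
    ((hf'.contDiffAt.hasStrictFDerivAt one_ne_zero).map_nhds_eq_of_surj
      (LinearMap.range_eq_top.2 (hderiv_surj x))).ge
  have hproper : IsProperMap f := by
    refine isProperMap_iff_tendsto_cocompact.2 ⟨hf'.continuous, ?_⟩
    rw [← Metric.cobounded_eq_cocompact]
    exact hf.tendsto_cobounded
  have hclopen : IsClopen (Set.range f) :=
    ⟨hproper.isClosedMap.isClosed_range, hopen.isOpen_range⟩
  exact Set.range_eq_univ.1 (hclopen.eq_univ (Set.range_nonempty f))

end Antilipschitz

section Complex

-- A Lipschitz right inverse sends the `o(x)` error of `w - a • f` to an `o(y)` error, so no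
-- inverse of `f'` is needed.
theorem hasDerivAt_comp_rightInverse
    {E : Type*} [NormedAddCommGroup E] [NormedSpace ℝ E] {K : ℝ≥0}
    {w f : E → ℂ} {g : ℂ → E} {f' : E →L[ℝ] ℂ} {a y : ℂ}
    (hf : AntilipschitzWith K f) (hg : Function.RightInverse g f)
    (hw' : HasFDerivAt w (a • f') (g y)) (hf' : HasFDerivAt f f' (g y)) :
    HasDerivAt (w ∘ g) a y := by
  have hg_lip := hf.to_rightInverse hg
  have hO : (fun y' ↦ g y' - g y) =O[𝓝 y] fun y' ↦ y' - y :=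
    .of_bound K <| .of_forall fun y' ↦ by simpa [dist_eq_norm] using hg_lip.dist_le_mul y' y
  have hzero : HasFDerivAt (fun x ↦ w x - a • f x) (0 : E →L[ℝ] ℂ) (g y) :=
    (hw'.sub (hf'.const_smul a)).congr_fderiv (sub_self _)
  have ho := (hzero.isLittleO.comp_tendsto (hg_lip.continuous.tendsto y)).trans_isBigO hO
  have herr : HasFDerivAt (fun y ↦ w (g y) - a * y) (0 : ℂ →L[ℂ] ℂ) y :=
    .of_isLittleO (by simpa [Function.comp_def, hg _] using ho)
  have hsum := herr.hasDerivAt.fun_add ((hasDerivAt_id y).const_mul a)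
  simpa [Function.comp_def] using hsum

theorem deriv_eq_deriv_of_lipschitzWith {F : Type*} [NormedAddCommGroup F] [NormedSpace ℂ F]
    [CompleteSpace F] {K : ℝ≥0} {G : ℂ → F} (hG : Differentiable ℂ G) (hlip : LipschitzWith K G)
    (z w : ℂ) : deriv G z = deriv G w := by
  have hG' : Differentiable ℂ (deriv G) := (hG.contDiff (n := 2)).differentiable_deriv_two
  refine hG'.apply_eq_apply_of_bounded (isBounded_iff_forall_norm_le.2 ⟨K, ?_⟩) z w
  rintro _ ⟨y, rfl⟩
  exact norm_deriv_le_of_lipschitz hlip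

/-- The real-linear map `v ↦ α v + β v̄` of `ℂ`: as a differential, it has Wirtinger derivatives
`∂_z = α` and `∂_z̄ = β`. -/
noncomputable def wirtingerCLM (α β : ℂ) : ℂ →L[ℝ] ℂ :=
  α • ContinuousLinearMap.id ℝ ℂ + β • (Complex.conjCLE : ℂ →L[ℝ] ℂ)

theorem wirtingerCLM_apply (α β v : ℂ) : wirtingerCLM α β v = α * v + β * conj v := rfl

theorem inner_wirtingerCLM_nonneg {α : ℝ} {β : ℂ} (h : ‖β‖ ≤ α) (v : ℂ) :
    0 ≤ ⟪wirtingerCLM α β v, v⟫ := by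
  have hβ : -(‖β‖ * ‖v‖ ^ 2) ≤ ⟪β * conj v, v⟫ := by
    simpa [sq, mul_assoc] using neg_le_of_abs_le (abs_real_inner_le_norm (β * conj v) v)
  have hα : ⟪(α : ℂ) * v, v⟫ = α * ‖v‖ ^ 2 := by
    rw [← Complex.real_smul, real_inner_smul_left, real_inner_self_eq_norm_sq]
  rw [wirtingerCLM_apply, inner_add_left, hα]
  nlinarith [mul_le_mul_of_nonneg_right h (sq_nonneg ‖v‖)]

/-- The ratio `a` in `conj (k v - L v) = a (k v + L v)` for `L = wirtingerCLM α β` with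
`α ^ 2 = ‖β‖ ^ 2 + k ^ 2`, i.e. the complex derivative of the Lewy rotation
`conj (k z - f z)` of a map `f` with differential `L`, in the coordinate `k z + f z`. -/
noncomputable def lewyCoeff (k α : ℝ) (β : ℂ) : ℂ :=
  -conj β / (α + k : ℝ)

variable {k : ℝ}

theorem conj_smul_sub_wirtingerCLM {α : ℝ} {β : ℂ} (hαk : α + k ≠ 0)
    (h : α ^ 2 = ‖β‖ ^ 2 + k ^ 2) (v : ℂ) :
    conj (k • v - wirtingerCLM α β v) = lewyCoeff k α β * (k • v + wirtingerCLM α β v) := by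
  have hβ : conj β * β = α ^ 2 - k ^ 2 := by
    rw [Complex.conj_mul']
    exact_mod_cast (eq_sub_of_add_eq h.symm)
  have hαk' : (α + k : ℂ) ≠ 0 := by exact_mod_cast hαk
  simp only [wirtingerCLM_apply, lewyCoeff, Complex.real_smul, map_sub, map_add, map_mul,
    Complex.conj_ofReal, Complex.conj_conj, Complex.ofReal_add]
  field_simp
  linear_combination conj v * hβ

theorem eq_and_eq_of_lewyCoeff_eq {α₁ α₂ : ℝ} {β₁ β₂ : ℂ} (hk : 0 < k) (hα₁ : 0 < α₁)
    (hα₂ : 0 < α₂) (h₁ : α₁ ^ 2 = ‖β₁‖ ^ 2 + k ^ 2) (h₂ : α₂ ^ 2 = ‖β₂‖ ^ 2 + k ^ 2)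
    (h : lewyCoeff k α₁ β₁ = lewyCoeff k α₂ β₂) : α₁ = α₂ ∧ β₁ = β₂ := by
  have hnorm {α : ℝ} {β : ℂ} (hα : 0 < α) (hβ : α ^ 2 = ‖β‖ ^ 2 + k ^ 2) :
      ‖lewyCoeff k α β‖ ^ 2 = (α - k) / (α + k) := by
    rw [lewyCoeff, norm_div, norm_neg, RCLike.norm_conj, Complex.norm_real, div_pow,
      Real.norm_eq_abs, sq_abs, eq_sub_of_add_eq hβ.symm]
    field_simp
    ring
  have hα : α₁ = α₂ := by
    have hratio : (α₁ - k) / (α₁ + k) = (α₂ - k) / (α₂ + k) := by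
      rw [← hnorm hα₁ h₁, ← hnorm hα₂ h₂, h]
    rw [div_eq_div_iff (by positivity) (by positivity)] at hratio
    exact mul_left_cancel₀ hk.ne' (by linarith)
  subst hα
  have hne : ((α₁ + k : ℝ) : ℂ) ≠ 0 := by exact_mod_cast (add_pos hα₁ hk).ne'
  refine ⟨rfl, ?_⟩
  simpa only [lewyCoeff, div_left_inj' hne, neg_inj, starRingEnd_apply, star_inj] using h

variable {f : ℂ → ℂ} {α : ℂ → ℝ} {β : ℂ → ℂ}

theorem exists_lipschitzWith_hasDerivAt_lewyCoeff (hk : 0 < k) (hf : ContDiff ℝ 1 f)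
    (hf' : ∀ z, HasFDerivAt f (wirtingerCLM (α z) (β z)) z) (hα : ∀ z, 0 < α z)
    (h : ∀ z, α z ^ 2 = ‖β z‖ ^ 2 + k ^ 2) :
    ∃ G : ℂ → ℂ, Differentiable ℂ G ∧ LipschitzWith 1 G ∧
      ∀ z, HasDerivAt G (lewyCoeff k (α z) (β z)) (k • z + f z) := by
  have hmono : IsMonotoneOperator f := isMonotoneOperator_of_hasFDerivAt hf' fun z v ↦
    inner_wirtingerCLM_nonneg ((sq_le_sq₀ (norm_nonneg _) (hα z).le).1 (by simp [h z, sq_nonneg])) v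
  have hanti := hmono.antilipschitzWith_smul_add hk
  have hsurj := surjective_of_antilipschitzWith_of_contDiff hanti
    ((contDiff_const.smul contDiff_id).add hf)
  obtain ⟨g, hg⟩ := hsurj.hasRightInverse
  have hadd (z : ℂ) : HasFDerivAt (fun z ↦ k • z + f z)
      (k • ContinuousLinearMap.id ℝ ℂ + wirtingerCLM (α z) (β z)) z :=
    ((hasFDerivAt_id z).const_smul k).add (hf' z)
  have hsub (z : ℂ) : HasFDerivAt (fun z ↦ conj (k • z - f z)) (lewyCoeff k (α z) (β z) •
      (k • ContinuousLinearMap.id ℝ ℂ + wirtingerCLM (α z) (β z))) z := by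
    refine (Complex.conjCLE.hasFDerivAt.comp z
      (((hasFDerivAt_id z).const_smul k).sub (hf' z))).congr_fderiv ?_
    ext1 v
    exact conj_smul_sub_wirtingerCLM (add_pos (hα z) hk).ne' (h z) v
  have hderiv (y : ℂ) :=
    hasDerivAt_comp_rightInverse hanti hg (hsub (g y)) (hadd (g y))
  refine ⟨(fun z ↦ conj (k • z - f z)) ∘ g, fun y ↦ (hderiv y).differentiableAt, ?_, fun z ↦ ?_⟩
  · refine .of_dist_le_mul fun x y ↦ ?_
    have hle := hmono.norm_smul_sub_sub_le hk.le (g x) (g y)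
    simp only [hg x, hg y] at hle
    simpa [dist_eq_norm, ← map_sub] using hle
  · simpa only [hg.leftInverse_of_injective hanti.injective z] using hderiv (k • z + f z)

theorem wirtinger_eq_of_sq_eq_norm_sq_add_sq_of_pos (hk : 0 < k) (hf : ContDiff ℝ 1 f)
    (hf' : ∀ z, HasFDerivAt f (wirtingerCLM (α z) (β z)) z) (hα : ∀ z, 0 < α z)
    (h : ∀ z, α z ^ 2 = ‖β z‖ ^ 2 + k ^ 2) (z w : ℂ) : α z = α w ∧ β z = β w := by
  obtain ⟨G, hG, hlip, hG'⟩ := exists_lipschitzWith_hasDerivAt_lewyCoeff hk hf hf' hα h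
  refine eq_and_eq_of_lewyCoeff_eq hk (hα z) (hα w) (h z) (h w) ?_
  rw [← (hG' z).deriv, ← (hG' w).deriv]
  exact deriv_eq_deriv_of_lipschitzWith hG hlip _ _

theorem wirtinger_eq_of_sq_eq_norm_sq_add_sq (hk : 0 < k) (hf : ContDiff ℝ 1 f)
    (hf' : ∀ z, HasFDerivAt f (wirtingerCLM (α z) (β z)) z)
    (h : ∀ z, α z ^ 2 = ‖β z‖ ^ 2 + k ^ 2) (z w : ℂ) : α z = α w ∧ β z = β w := by
  have hα (z : ℂ) : α z ≠ 0 := fun hz ↦ by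
    nlinarith [h z, sq_nonneg ‖β z‖, pow_pos hk 2]
  have hcont : Continuous α := by
    have hα_eq : α = fun z ↦ ((fderiv ℝ f z 1).re + (fderiv ℝ f z Complex.I).im) / 2 := by
      ext z
      simp only [(hf' z).fderiv, wirtingerCLM_apply, mul_one, map_one, Complex.conj_I, mul_neg,
        Complex.add_re, Complex.add_im, Complex.neg_im, Complex.mul_im, Complex.ofReal_re,
        Complex.I_re, Complex.I_im]
      ring
    rw [hα_eq]
    have := hf.continuous_fderiv one_ne_zero
    fun_prop
  rcases (hα z).lt_or_gt with hz | hz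
  · have hneg (z' : ℂ) : α z' < 0 := isPreconnected_univ.gt_of_ne hcont.continuousOn
      (fun x _ ↦ hα x) ⟨z, trivial, hz⟩ trivial
    have hf'_neg (z : ℂ) : HasFDerivAt (-f) (wirtingerCLM (-α z : ℝ) (-β z)) z := by
      refine (hf' z).neg.congr_fderiv ?_
      ext1 v
      simp only [neg_apply, wirtingerCLM_apply]
      push_cast
      ring
    simpa using wirtinger_eq_of_sq_eq_norm_sq_add_sq_of_pos (f := -f) (α := -α) (β := -β) hk
      hf.neg hf'_neg (fun z ↦ neg_pos.2 (hneg z)) (by simpa using h) z w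
  · have hpos (z' : ℂ) : 0 < α z' := isPreconnected_univ.lt_of_ne hcont.continuousOn
      (fun x _ ↦ hα x) ⟨z, trivial, hz⟩ trivial
    exact wirtinger_eq_of_sq_eq_norm_sq_add_sq_of_pos hk hf hf' hpos h z w

end Complex

section SecondDerivative

section Normed

variable {E F G : Type*} [NormedAddCommGroup E] [NormedSpace ℝ E] [NormedAddCommGroup F]
  [NormedSpace ℝ F] [NormedAddCommGroup G] [NormedSpace ℝ G] {u : E → G}

theorem differentiable_fderiv_of_contDiff_two (hu : ContDiff ℝ 2 u) :
    Differentiable ℝ (fderiv ℝ u) :=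
  (hu.fderiv_right (m := 1) le_rfl).differentiable one_ne_zero

theorem eq_quadratic_of_fderiv_fderiv_eq_const (hu : ContDiff ℝ 2 u) {B : E →L[ℝ] E →L[ℝ] G}
    (hB : ∀ x, fderiv ℝ (fderiv ℝ u) x = B) (x : E) :
    u x = (1 / 2 : ℝ) • B x x + fderiv ℝ u 0 x + u 0 := by
  have hdu := differentiable_fderiv_of_contDiff_two hu
  have hsymm (v w : E) : B v w = B w v :=
    hB 0 ▸ (hu.contDiffAt.isSymmSndFDerivAt (by simp)).eq v w
  have hgrad (x : E) : fderiv ℝ u x = B x + fderiv ℝ u 0 := by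
    have hderiv (x : E) :
        HasFDerivAt (fun x ↦ fderiv ℝ u x - B x) (0 : E →L[ℝ] E →L[ℝ] G) x :=
      ((hdu x).hasFDerivAt.sub B.hasFDerivAt).congr_fderiv (by rw [hB, sub_self])
    have hconst := is_const_of_fderiv_eq_zero (𝕜 := ℝ) (fun x ↦ (hderiv x).differentiableAt)
      (fun x ↦ (hderiv x).fderiv) x 0
    simpa [sub_eq_iff_eq_add, add_comm] using hconst
  have hderiv (x : E) : HasFDerivAt
      (fun x ↦ u x - ((1 / 2 : ℝ) • B x x + fderiv ℝ u 0 x)) (0 : E →L[ℝ] G) x := by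
    refine ((hu.differentiable two_ne_zero x).hasFDerivAt.sub
      ((((B.hasFDerivAt (x := x)).clm_apply (hasFDerivAt_id x)).const_smul (1 / 2 : ℝ)).add
        (fderiv ℝ u 0).hasFDerivAt)).congr_fderiv ?_
    ext v
    simp only [hgrad x, hsymm v x, add_apply, sub_apply, smul_apply, zero_apply,
      ContinuousLinearMap.comp_id, ContinuousLinearMap.flip_apply, id_eq]
    module
  have hconst := is_const_of_fderiv_eq_zero (𝕜 := ℝ) (fun x ↦ (hderiv x).differentiableAt)
    (fun x ↦ (hderiv x).fderiv) x 0
  simp only [map_zero, smul_zero, add_zero, sub_zero] at hconst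
  rw [← hconst, add_sub_cancel]

theorem fderiv_fderiv_comp_clm (hu : ContDiff ℝ 2 u) (e : F →L[ℝ] E) (x v w : F) :
    fderiv ℝ (fderiv ℝ (u ∘ e)) x v w = fderiv ℝ (fderiv ℝ u) (e x) (e v) (e w) := by
  have hfst : fderiv ℝ (u ∘ e) = fun x ↦ (fderiv ℝ u (e x)).comp e := by
    ext1 x
    rw [fderiv_comp x (hu.differentiable two_ne_zero _) e.differentiableAt, e.fderiv]
  have hsnd : HasFDerivAt (fun x ↦ (fderiv ℝ u (e x)).comp e) _ x :=
    ((differentiable_fderiv_of_contDiff_two hu (e x)).hasFDerivAt.comp x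
      e.hasFDerivAt).clm_comp (hasFDerivAt_const e x)
  rw [hfst, hsnd.fderiv]
  simp

end Normed

section Gradient

variable {E : Type*} [NormedAddCommGroup E] [InnerProductSpace ℝ E] [CompleteSpace E] {u : E → ℝ}

theorem contDiff_gradient (hu : ContDiff ℝ 2 u) : ContDiff ℝ 1 (gradient u) :=
  (InnerProductSpace.toDual ℝ E).symm.contDiff.comp (hu.fderiv_right le_rfl)

theorem hasFDerivAt_gradient (hu : ContDiff ℝ 2 u) (x : E) :
    HasFDerivAt (gradient u)
      ((InnerProductSpace.toDual ℝ E).symm.toContinuousLinearEquiv.toContinuousLinearMap ∘L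
        fderiv ℝ (fderiv ℝ u) x) x :=
  (InnerProductSpace.toDual ℝ E).symm.toContinuousLinearEquiv.hasFDerivAt.comp x
    (differentiable_fderiv_of_contDiff_two hu x).hasFDerivAt

end Gradient

end SecondDerivative

section Jorgens

theorem toDual_symm_eq_wirtingerCLM {B : ℂ →L[ℝ] ℂ →L[ℝ] ℝ} (hB : ∀ v w, B v w = B w v) (v : ℂ) :
    (InnerProductSpace.toDual ℝ ℂ).symm (B v) =
      wirtingerCLM (((B 1 1 + B Complex.I Complex.I) / 2 : ℝ) : ℂ)
        ⟨(B 1 1 - B Complex.I Complex.I) / 2, B 1 Complex.I⟩ v := by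
  have hv : v = v.re • (1 : ℂ) + v.im • Complex.I := by simp
  have hre (z : ℂ) : z.re = ⟪z, 1⟫ := by simp [Complex.inner]
  have him (z : ℂ) : z.im = ⟪z, Complex.I⟫ := by simp [Complex.inner]
  have hB1 : B v 1 = v.re * B 1 1 + v.im * B 1 Complex.I := by
    conv_lhs => rw [hv]
    simp only [map_add, map_smul, add_apply, smul_apply, smul_eq_mul, hB Complex.I 1]
  have hBI : B v Complex.I = v.re * B 1 Complex.I + v.im * B Complex.I Complex.I := by
    conv_lhs => rw [hv]
    simp only [map_add, map_smul, add_apply, smul_apply, smul_eq_mul]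
  apply Complex.ext
  · rw [hre, InnerProductSpace.toDual_symm_apply, hB1, wirtingerCLM_apply]
    simp only [Complex.add_re, Complex.mul_re, Complex.ofReal_re, Complex.ofReal_im,
      Complex.conj_re, Complex.conj_im]
    ring
  · rw [him, InnerProductSpace.toDual_symm_apply, hBI, wirtingerCLM_apply]
    simp only [Complex.add_im, Complex.mul_im, Complex.ofReal_re, Complex.ofReal_im,
      Complex.conj_re, Complex.conj_im]
    ring

theorem fderiv_fderiv_eq_of_det_eq_const {u : ℂ → ℝ} (hu : ContDiff ℝ 2 u) {d : ℝ} (hd : 0 < d)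
    (hdet : ∀ z, fderiv ℝ (fderiv ℝ u) z 1 1 * fderiv ℝ (fderiv ℝ u) z Complex.I Complex.I -
      fderiv ℝ (fderiv ℝ u) z 1 Complex.I ^ 2 = d) (z w : ℂ) :
    fderiv ℝ (fderiv ℝ u) z = fderiv ℝ (fderiv ℝ u) w := by
  set B := fderiv ℝ (fderiv ℝ u)
  have hsymm (z v w : ℂ) : B z v w = B z w v := (hu.contDiffAt.isSymmSndFDerivAt (by simp)).eq v w
  have hgrad (z : ℂ) : HasFDerivAt (gradient u) (wirtingerCLM
      (((B z 1 1 + B z Complex.I Complex.I) / 2 : ℝ) : ℂ)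
      ⟨(B z 1 1 - B z Complex.I Complex.I) / 2, B z 1 Complex.I⟩) z :=
    (hasFDerivAt_gradient hu z).congr_fderiv <|
      ContinuousLinearMap.ext fun v ↦ toDual_symm_eq_wirtingerCLM (hsymm z) v
  have hnorm (z : ℂ) : ((B z 1 1 + B z Complex.I Complex.I) / 2) ^ 2 =
      ‖(⟨(B z 1 1 - B z Complex.I Complex.I) / 2, B z 1 Complex.I⟩ : ℂ)‖ ^ 2 + √d ^ 2 := by
    rw [Complex.sq_norm, Complex.normSq_mk, sq_sqrt hd.le, ← hdet z]
    ring
  obtain ⟨hα, hβ⟩ := wirtinger_eq_of_sq_eq_norm_sq_add_sq (sqrt_pos.2 hd) (contDiff_gradient hu)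
    hgrad hnorm z w
  refine ContinuousLinearMap.ext fun v ↦ (InnerProductSpace.toDual ℝ ℂ).symm.injective ?_
  rw [toDual_symm_eq_wirtingerCLM (hsymm z), toDual_symm_eq_wirtingerCLM (hsymm w), hα, hβ]

end Jorgens

section Hessian

variable {n : ℕ} {u : EuclideanSpace ℝ (Fin n) → ℝ}

theorem hessianMatrix_apply (hu : ContDiff ℝ 2 u) (x : EuclideanSpace ℝ (Fin n)) (i j : Fin n) :
    hessianMatrix u x i j =
      fderiv ℝ (fderiv ℝ u) x (EuclideanSpace.single i 1) (EuclideanSpace.single j 1) := by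
  simp [hessianMatrix, fderiv_clm_apply (differentiable_fderiv_of_contDiff_two hu x)
    (differentiableAt_const _)]

theorem hessianMatrix_isHermitian (hu : ContDiff ℝ 2 u) (x : EuclideanSpace ℝ (Fin n)) :
    (hessianMatrix u x).IsHermitian := by
  ext i j
  rw [Matrix.conjTranspose_apply, star_trivial, hessianMatrix_apply hu, hessianMatrix_apply hu]
  exact (hu.contDiffAt.isSymmSndFDerivAt (by simp)).eq _ _

theorem map_eq_sum_single {ι : Type*} [Fintype ι] [DecidableEq ι]
    (φ : EuclideanSpace ℝ ι →L[ℝ] ℝ) (v : EuclideanSpace ℝ ι) :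
    φ v = ∑ i, φ (EuclideanSpace.single i 1) * v i := by
  conv_lhs => rw [← (EuclideanSpace.basisFun ι ℝ).sum_repr v]
  simp [mul_comm]

theorem fderiv_fderiv_apply_eq_sum_hessianMatrix (hu : ContDiff ℝ 2 u)
    (x v w : EuclideanSpace ℝ (Fin n)) :
    fderiv ℝ (fderiv ℝ u) x v w = ∑ i, ∑ j, hessianMatrix u x i j * v i * w j := by
  rw [← ContinuousLinearMap.flip_apply, map_eq_sum_single]
  refine Finset.sum_congr rfl fun i _ ↦ ?_
  rw [ContinuousLinearMap.flip_apply, map_eq_sum_single, Finset.sum_mul]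
  refine Finset.sum_congr rfl fun j _ ↦ ?_
  rw [hessianMatrix_apply hu]
  ring

theorem isQuadraticPoly_of_hessianMatrix_eq (hu : ContDiff ℝ 2 u)
    (h : ∀ x y, hessianMatrix u x = hessianMatrix u y) : IsQuadraticPoly u := by
  refine ⟨hessianMatrix u 0, fun j ↦ fderiv ℝ u 0 (EuclideanSpace.single j 1), u 0,
    hessianMatrix_isHermitian hu 0, fun x ↦ ?_⟩
  have hB (x) : fderiv ℝ (fderiv ℝ u) x = fderiv ℝ (fderiv ℝ u) 0 := by
    ext v w
    simp only [fderiv_fderiv_apply_eq_sum_hessianMatrix hu, h x 0]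
  rw [eq_quadratic_of_fderiv_fderiv_eq_const hu hB, fderiv_fderiv_apply_eq_sum_hessianMatrix hu,
    map_eq_sum_single (fderiv ℝ u 0), smul_eq_mul]

theorem hessianMatrix_add_norm_sq (hu : ContDiff ℝ 2 u) (c : ℝ) (x : EuclideanSpace ℝ (Fin n)) :
    hessianMatrix (fun y ↦ u y + c / 2 * ‖y‖ ^ 2) x = hessianMatrix u x + c • 1 := by
  have hv : ContDiff ℝ 2 (fun y ↦ u y + c / 2 * ‖y‖ ^ 2) :=
    hu.add (contDiff_const.mul (contDiff_norm_sq ℝ))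
  have hfst : fderiv ℝ (fun y ↦ u y + c / 2 * ‖y‖ ^ 2) =
      fderiv ℝ u + ⇑(c • innerSL ℝ) := by
    ext1 y
    refine ((hu.differentiable two_ne_zero y).hasFDerivAt.add
      ((hasStrictFDerivAt_norm_sq y).hasFDerivAt.const_mul (c / 2))).fderiv.trans ?_
    simp only [Pi.add_apply, smul_apply]
    module
  have hsnd := (differentiable_fderiv_of_contDiff_two hu x).hasFDerivAt.add
    (c • innerSL ℝ).hasFDerivAt
  ext i j
  have hinner : innerSL ℝ (EuclideanSpace.single i 1 : EuclideanSpace ℝ (Fin n))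
      (EuclideanSpace.single j 1) = (1 : Matrix (Fin n) (Fin n) ℝ) i j := by
    rw [innerSL_apply_apply, EuclideanSpace.inner_single_left]
    simp [Matrix.one_apply]
  rw [Matrix.add_apply, Matrix.smul_apply, ← hinner, hessianMatrix_apply hv, hessianMatrix_apply hu,
    hfst, hsnd.fderiv]
  rfl

theorem hessianMatrix_eq_of_det_eq_const {u : EuclideanSpace ℝ (Fin 2) → ℝ} (hu : ContDiff ℝ 2 u)
    {d : ℝ} (hd : 0 < d) (hdet : ∀ x, (hessianMatrix u x).det = d)
    (x y : EuclideanSpace ℝ (Fin 2)) : hessianMatrix u x = hessianMatrix u y := by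
  let e := Complex.orthonormalBasisOneI.repr.toContinuousLinearEquiv
  have he_one : e 1 = EuclideanSpace.single 0 1 := by ext i; fin_cases i <;> simp [e]
  have he_I : e Complex.I = EuclideanSpace.single 1 1 := by ext i; fin_cases i <;> simp [e]
  have hD2 (z v w : ℂ) : fderiv ℝ (fderiv ℝ (u ∘ e)) z v w =
      fderiv ℝ (fderiv ℝ u) (e z) (e v) (e w) :=
    fderiv_fderiv_comp_clm hu (e : ℂ →L[ℝ] EuclideanSpace ℝ (Fin 2)) z v w
  have hdet_e (z : ℂ) : fderiv ℝ (fderiv ℝ (u ∘ e)) z 1 1 *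
      fderiv ℝ (fderiv ℝ (u ∘ e)) z Complex.I Complex.I -
      fderiv ℝ (fderiv ℝ (u ∘ e)) z 1 Complex.I ^ 2 = d := by
    have hsymm : hessianMatrix u (e z) 0 1 = hessianMatrix u (e z) 1 0 :=
      (hessianMatrix_isHermitian hu (e z)).apply 1 0
    rw [← hdet (e z), Matrix.det_fin_two, ← hsymm, ← sq]
    simp only [hessianMatrix_apply hu, ← he_one, ← he_I, hD2]
  have hconst := fderiv_fderiv_eq_of_det_eq_const (hu.comp e.contDiff) hd hdet_e
    (e.symm x) (e.symm y)
  have hD2_eq (v w : EuclideanSpace ℝ (Fin 2)) :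
      fderiv ℝ (fderiv ℝ u) x v w = fderiv ℝ (fderiv ℝ u) y v w := by
    simpa only [hD2, e.apply_symm_apply] using
      DFunLike.congr_fun (DFunLike.congr_fun hconst (e.symm v)) (e.symm w)
  ext i j
  rw [hessianMatrix_apply hu, hessianMatrix_apply hu, hD2_eq]

end Hessian

section Arctan

theorem sin_arctan_add_arctan_mul (a b : ℝ) :
    sin (arctan a + arctan b) * (1 - a * b) = cos (arctan a + arctan b) * (a + b) := by
  have hsin (x : ℝ) : sin (arctan x) = x * cos (arctan x) := by
    rw [← tan_mul_cos (cos_arctan_pos x).ne', tan_arctan]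
  rw [sin_add, cos_add, hsin a, hsin b]
  ring

theorem sin_arctan_add_arctan_ne_zero {a b : ℝ} (h : arctan a + arctan b ≠ 0) :
    sin (arctan a + arctan b) ≠ 0 := by
  have ha := arctan_mem_Ioo a
  have hb := arctan_mem_Ioo b
  exact (sin_eq_zero_iff_of_lt_of_lt (by linarith [ha.1, hb.1]) (by linarith [ha.2, hb.2])).not.2 h

variable {M : Matrix (Fin 2) (Fin 2) ℝ} (hM : M.IsHermitian)

theorem sin_sum_arctan_eigenvalues_ne_zero (h : ∑ i, arctan (hM.eigenvalues i) ≠ 0) :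
    sin (∑ i, arctan (hM.eigenvalues i)) ≠ 0 := by
  rw [Fin.sum_univ_two] at h ⊢
  exact sin_arctan_add_arctan_ne_zero h

theorem det_add_cot_sum_arctan_eigenvalues (h : ∑ i, arctan (hM.eigenvalues i) ≠ 0) :
    (M + cot (∑ i, arctan (hM.eigenvalues i)) • (1 : Matrix (Fin 2) (Fin 2) ℝ)).det =
      (sin (∑ i, arctan (hM.eigenvalues i)) ^ 2)⁻¹ := by
  have hsin := sin_sum_arctan_eigenvalues_ne_zero hM h
  have hdet : M.det = hM.eigenvalues 0 * hM.eigenvalues 1 := by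
    simpa using hM.det_eq_prod_eigenvalues
  have htrace : M.trace = hM.eigenvalues 0 + hM.eigenvalues 1 := by
    simpa using hM.trace_eq_sum_eigenvalues
  rw [Fin.sum_univ_two] at hsin ⊢
  set μ := arctan (hM.eigenvalues 0) + arctan (hM.eigenvalues 1) with hμ
  have htan : sin μ * (1 - M.det) = cos μ * M.trace := by
    rw [hdet, htrace, hμ, sin_arctan_add_arctan_mul]
  rw [Matrix.det_fin_two, Matrix.trace_fin_two] at htan
  rw [Matrix.det_fin_two, cot_eq_cos_div_sin]
  simp only [Matrix.add_apply, Matrix.smul_apply, Matrix.one_apply_eq, Matrix.one_apply_ne, ne_eq,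
    zero_ne_one, one_ne_zero, not_false_eq_true, smul_eq_mul, mul_one, mul_zero, add_zero]
  field_simp
  linear_combination sin_sq_add_cos_sq μ - sin μ * htan

end Arctan

theorem special_lagrangian_two_dim_general (u : EuclideanSpace ℝ (Fin 2) → ℝ)
    (hu : ContDiff ℝ 2 u) (μ : ℝ) (hμ : μ ≠ 0)
    (hSL : ∀ x, ∑ i, arctan ((hessianMatrix_isHermitian hu x).eigenvalues i) = μ) :
    IsQuadraticPoly u := by
  let v : EuclideanSpace ℝ (Fin 2) → ℝ := fun x ↦ u x + cot μ / 2 * ‖x‖ ^ 2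
  have hv : ContDiff ℝ 2 v := hu.add (contDiff_const.mul (contDiff_norm_sq ℝ))
  have hdet (x) : (hessianMatrix v x).det = (sin μ ^ 2)⁻¹ := by
    rw [hessianMatrix_add_norm_sq hu, ← hSL x]
    exact det_add_cot_sum_arctan_eigenvalues _ (hSL x ▸ hμ)
  have hsin : sin μ ≠ 0 := hSL 0 ▸ sin_sum_arctan_eigenvalues_ne_zero _ (hSL 0 ▸ hμ)
  refine isQuadraticPoly_of_hessianMatrix_eq hu fun x y ↦ add_right_cancel (b := cot μ • 1) ?_
  rw [← hessianMatrix_add_norm_sq hu, ← hessianMatrix_add_norm_sq hu]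
  exact hessianMatrix_eq_of_det_eq_const hv (by positivity) hdet x y

/-- The special Lagrangian equation in two variables: if
`arctan λ₁ + arctan λ₂ = μ ≠ 0` for the Hessian eigenvalues `λ₁, λ₂` of a smooth
entire function `u` on ℝ², then `u` is a quadratic polynomial. -/
theorem special_lagrangian_two_dim (u : EuclideanSpace ℝ (Fin 2) → ℝ)
    (hu : ContDiff ℝ (⊤ : ℕ∞) u)
    (hsym : ∀ x, (hessianMatrix u x).IsHermitian)
    (μ : ℝ) (hμ : μ ≠ 0)
    (hSL : ∀ x, ∑ i, Real.arctan ((hsym x).eigenvalues i) = μ) :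
    IsQuadraticPoly u :=
  special_lagrangian_two_dim_general u (contDiff_infty.1 hu 2) μ hμ hSL
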